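/- In the sum-variant with k = 2 facilities, for every number of groups m ≥ 2 with m ∉ {3,5}, the mechanism M_m(1/2, √2−1, 2−√2) has approximation ratio at most 1 + √2: on every instance with m groups its output has social cost at most (1+√2) times the minimum social cost over all feasible solutions. -/

import Mathlib

open Finset

noncomputable section

/-- A distributed facility location setting for `k` facilities and `m` groups:
`n ≥ 2` agents on the real line, partitioned into `m ≥ k` disjoint nonempty groups. -/
structure FLSetting (k m : ℕ) where
  n : ℕ
  hn : 2 ≤ n
  hmk : k ≤ m
  grp : Fin n → Fin m
  surj : Function.Surjective grp

/-- A two-phase mechanism for `k` facilities: for each number `m` of groups, a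
representative function on finite multisets of reals, and a selection function
producing the `k` facility locations from the multiset of representatives. -/
structure TwoPhase (k : ℕ) where
  rep : ℕ → Multiset ℝ → ℝ
  sel : ℕ → Multiset ℝ → Fin k → ℝ

/-- Validity of a two-phase mechanism: the representative of a nonempty multiset
is one of its elements, and the selected facility locations form a sub-multiset
of the representatives. -/
def TwoPhase.Valid {k : ℕ} (M : TwoPhase k) : Prop :=
  (∀ (m : ℕ) (S : Multiset ℝ), S ≠ 0 → M.rep m S ∈ S) ∧
  (∀ (m : ℕ) (R : Multiset ℝ), Multiset.card R = m → k ≤ m →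
    (↑(List.ofFn (M.sel m R)) : Multiset ℝ) ≤ R)

/-- The multiset of (reported) positions of the agents in group `j`. -/
def groupMS {k m : ℕ} (S : FLSetting k m) (x : Fin S.n → ℝ) (j : Fin m) : Multiset ℝ :=
  (Finset.univ.filter (fun i => S.grp i = j)).val.map x

/-- The number of agents in group `j`. -/
def groupSize {k m : ℕ} (S : FLSetting k m) (j : Fin m) : ℕ :=
  (Finset.univ.filter (fun i => S.grp i = j)).card

/-- The multiset of the `m` group representatives. -/
def repsMS {k m : ℕ} (M : TwoPhase k) (S : FLSetting k m) (x : Fin S.n → ℝ) : Multiset ℝ :=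
  (Finset.univ.val.map fun j : Fin m => M.rep m (groupMS S x j))

/-- The facility locations output by mechanism `M` on reported positions `x`. -/
def outcome {k m : ℕ} (M : TwoPhase k) (S : FLSetting k m) (x : Fin S.n → ℝ) : Fin k → ℝ :=
  M.sel m (repsMS M S x)

/-- Sum-variant individual cost: total distance to all facilities. -/
def sumCost (k : ℕ) (xi : ℝ) (y : Fin k → ℝ) : ℝ := ∑ ℓ, |xi - y ℓ|

/-- Max-variant individual cost: distance to the farthest facility. -/
def maxCost (k : ℕ) (xi : ℝ) (y : Fin k → ℝ) : ℝ := ⨆ ℓ, |xi - y ℓ|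

/-- Social cost: average over groups of the average individual cost within the group. -/
def SC {k m : ℕ} (cost : ℝ → (Fin k → ℝ) → ℝ) (S : FLSetting k m) (x : Fin S.n → ℝ)
    (y : Fin k → ℝ) : ℝ :=
  (1 / (m : ℝ)) * ∑ j : Fin m,
    (1 / (groupSize S j : ℝ)) *
      ∑ i ∈ Finset.univ.filter (fun i => S.grp i = j), cost (x i) y

/-- A feasible solution opens the `k` facilities at the positions of `k` distinct agents. -/
def Feasible {k m : ℕ} (S : FLSetting k m) (x : Fin S.n → ℝ) (y : Fin k → ℝ) : Prop :=
  ∃ f : Fin k → Fin S.n, Function.Injective f ∧ ∀ ℓ, y ℓ = x (f ℓ)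

/-- Strategyproofness with respect to an individual cost function. -/
def Strategyproof {k : ℕ} (cost : ℝ → (Fin k → ℝ) → ℝ) (M : TwoPhase k) : Prop :=
  ∀ (m : ℕ) (S : FLSetting k m) (x : Fin S.n → ℝ) (i : Fin S.n) (x' : ℝ),
    cost (x i) (outcome M S x) ≤ cost (x i) (outcome M S (Function.update x i x'))

/-- Strategyproofness restricted to instances with exactly `m` groups. -/
def StrategyproofOn {k : ℕ} (cost : ℝ → (Fin k → ℝ) → ℝ) (M : TwoPhase k) (m : ℕ) : Prop :=
  ∀ (S : FLSetting k m) (x : Fin S.n → ℝ) (i : Fin S.n) (x' : ℝ),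
    cost (x i) (outcome M S x) ≤ cost (x i) (outcome M S (Function.update x i x'))

/-- The `t`-th leftmost element of a multiset of reals (1-indexed). -/
def kthLeftmost (S : Multiset ℝ) (t : ℕ) : ℝ := (S.sort (· ≤ ·)).getD (t - 1) 0

/-- The mechanism `M_m(θ, ℓ, r)` for two facilities: each group's representative is the
position of its `⌈θ·n_g⌉`-th leftmost agent, and the facilities are opened at the
`⌈ℓm⌉`-th and `⌈rm⌉`-th leftmost representative locations. -/
def Mmech (θ l r : ℝ) : TwoPhase 2 where
  rep := fun _ S => kthLeftmost S ⌈θ * (Multiset.card S : ℝ)⌉₊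
  sel := fun m R => ![kthLeftmost R ⌈l * (m : ℝ)⌉₊, kthLeftmost R ⌈r * (m : ℝ)⌉₊]

/-!
With `θ`-quantile representatives, a location at the `c`-quantile of the representatives has agents
of total weight at least `θ * c` weakly to its left and at least `(1 - θ) * (1 - c)` weakly to its
right, when the total weight of all agents is `1`.

Let `D z` be the weighted total distance of the agents to `z`. Moving a location from `u` to `v > u`
raises `D` by at most `(v - u) * (1 - 2 * R)`, where `R` is the weight weakly right of `v`, while
`D u` itself is at least `(v - u) * R`. So the relative loss on each segment between a benchmark
location `o` and the facilities `a ≤ b` is controlled by quantile weights. A segment between `o` and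
only one of `a`, `b` costs once, one separating `o` from both costs twice. For `θ = 1 / 2` the
resulting ratios are `1 / l` and `(1 + l) / (1 - l)` at `a`, and the same with `1 - r` in place of
`l` at `b`. They balance when `l ^ 2 + 2 * l = 1`, that is `l = √2 - 1`, with value `1 + √2`.
-/

/-! ### Order statistics of a multiset -/

lemma length_le_countP_of_sublist {α : Type*} {p : α → Bool} {l l' : List α} (h : l.Sublist l')
    (hp : ∀ z ∈ l, p z) : l.length ≤ l'.countP p :=
  (List.countP_eq_length.2 hp) ▸ h.countP_le

lemma countP_sort {α : Type*} [LinearOrder α] (M : Multiset α) (p : α → Prop) [DecidablePred p] :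
    (M.sort (· ≤ ·)).countP (fun z => decide (p z)) = M.countP p := by
  rw [← Multiset.coe_countP, Multiset.sort_eq]

lemma kthLeftmost_eq_getElem {M : Multiset ℝ} {t : ℕ} (ht : t - 1 < (M.sort (· ≤ ·)).length) :
    kthLeftmost M t = (M.sort (· ≤ ·))[t - 1] :=
  List.getD_eq_getElem _ _ ht

lemma sort_getElem_mono {α : Type*} [LinearOrder α] (M : Multiset α) {i j : ℕ} (hij : i ≤ j)
    (hj : j < (M.sort (· ≤ ·)).length) :
    (M.sort (· ≤ ·))[i]'(hij.trans_lt hj) ≤ (M.sort (· ≤ ·))[j] :=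
  (Multiset.pairwise_sort M (· ≤ ·)).sortedLE.getElem_le_getElem_of_le hij

lemma kthLeftmost_mono {M : Multiset ℝ} {s t : ℕ} (hst : s ≤ t) (ht : t ≤ M.card) :
    kthLeftmost M s ≤ kthLeftmost M t := by
  rcases hst.eq_or_lt with rfl | hlt
  · exact le_rfl
  have hlen : t - 1 < (M.sort (· ≤ ·)).length := by rw [Multiset.length_sort]; omega
  rw [kthLeftmost_eq_getElem (by omega), kthLeftmost_eq_getElem hlen]
  exact sort_getElem_mono M (by omega) _

lemma le_countP_le_kthLeftmost {M : Multiset ℝ} {t : ℕ} (ht : t ≤ M.card) :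
    t ≤ M.countP (· ≤ kthLeftmost M t) := by
  have hcard : (M.sort (· ≤ ·)).length = M.card := Multiset.length_sort _
  have hlen : ((M.sort (· ≤ ·)).take t).length = t := by simpa using ht
  calc t = ((M.sort (· ≤ ·)).take t).length := hlen.symm
    _ ≤ (M.sort (· ≤ ·)).countP (fun z => decide (z ≤ kthLeftmost M t)) := by
      refine length_le_countP_of_sublist (List.take_sublist _ _) fun z hz => ?_
      obtain ⟨i, hi, rfl⟩ := List.mem_take_iff_getElem.1 hz
      rw [decide_eq_true_iff, kthLeftmost_eq_getElem (by omega)]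
      exact sort_getElem_mono M (by omega) _
    _ = M.countP (· ≤ kthLeftmost M t) := countP_sort M _

-- By truncated subtraction `kthLeftmost M 0` is the minimum of `M`, like `kthLeftmost M 1`.
lemma card_sub_le_countP_kthLeftmost_le (M : Multiset ℝ) (t : ℕ) :
    M.card - (t - 1) ≤ M.countP (kthLeftmost M t ≤ ·) := by
  calc M.card - (t - 1) = ((M.sort (· ≤ ·)).drop (t - 1)).length := by
        rw [List.length_drop, Multiset.length_sort]
    _ ≤ (M.sort (· ≤ ·)).countP (fun z => decide (kthLeftmost M t ≤ z)) := by
      refine length_le_countP_of_sublist (List.drop_sublist _ _) fun z hz => ?_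
      obtain ⟨i, hi, rfl⟩ := List.mem_drop_iff_getElem.1 hz
      rw [decide_eq_true_iff, kthLeftmost_eq_getElem (by omega)]
      exact sort_getElem_mono M (by omega) _
    _ = M.countP (kthLeftmost M t ≤ ·) := countP_sort M _

lemma ceil_mul_natCast_le {c : ℝ} (hc : c ≤ 1) (n : ℕ) : ⌈c * (n : ℝ)⌉₊ ≤ n :=
  Nat.ceil_le.2 (mul_le_of_le_one_left n.cast_nonneg hc)

lemma mul_card_le_countP_le_kthLeftmost (M : Multiset ℝ) {c : ℝ} (hc : c ≤ 1) :
    c * (M.card : ℝ) ≤ M.countP (· ≤ kthLeftmost M ⌈c * (M.card : ℝ)⌉₊) :=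
  (Nat.le_ceil _).trans (mod_cast le_countP_le_kthLeftmost (ceil_mul_natCast_le hc _))

lemma mul_card_le_countP_kthLeftmost_le (M : Multiset ℝ) {c : ℝ} (hc : 0 ≤ c) :
    (1 - c) * (M.card : ℝ) ≤ M.countP (kthLeftmost M ⌈c * (M.card : ℝ)⌉₊ ≤ ·) := by
  set t := ⌈c * (M.card : ℝ)⌉₊
  have hceil : ((t - 1 : ℕ) : ℝ) ≤ c * M.card := by
    have hnonneg : 0 ≤ c * (M.card : ℝ) := by positivity
    exact (Nat.le_floor_iff hnonneg).1 (by have := Nat.ceil_le_floor_add_one (c * M.card); omega)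
  have hcount : (M.card : ℝ) ≤ M.countP (kthLeftmost M t ≤ ·) + (t - 1 : ℕ) :=
    mod_cast Nat.sub_le_iff_le_add.1 (card_sub_le_countP_kthLeftmost_le M t)
  linarith

lemma countP_mono_of_imp {α : Type*} {p q : α → Prop} [DecidablePred p] [DecidablePred q]
    (M : Multiset α) (h : ∀ z, p z → q z) : M.countP p ≤ M.countP q := by
  rw [Multiset.countP_eq_card_filter, Multiset.countP_eq_card_filter]
  exact Multiset.card_le_card (Multiset.monotone_filter_right M h)

/-! ### Weighted distances on the line -/

section WeightedDist

variable {ι : Type*} [Fintype ι]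

/-- The weighted total distance from the points `x i` to the location `z`: the share of a facility
at `z` in the social cost. -/
def weightedDist (w x : ι → ℝ) (z : ℝ) : ℝ := ∑ i, w i * |x i - z|

lemma weightedDist_neg (w x : ι → ℝ) (z : ℝ) :
    weightedDist w (-x) (-z) = weightedDist w x z := by
  simp only [weightedDist, Pi.neg_apply, neg_sub_neg, abs_sub_comm]

variable {w x : ι → ℝ} {a b o C : ℝ}

lemma weightedDist_le_add_mul_sum_ge (hw : ∀ i, 0 ≤ w i) (u v : ℝ) :
    weightedDist w x v ≤
      weightedDist w x u + (v - u) * (∑ i, w i - 2 * ∑ i with v ≤ x i, w i) := by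
  simp only [weightedDist, sum_filter, mul_sum, ← sum_sub_distrib, ← sum_add_distrib]
  refine sum_le_sum fun i _ => ?_
  have hpoint : |x i - v| ≤ |x i - u| + (v - u) * (1 - 2 * if v ≤ x i then 1 else 0) := by
    split_ifs <;> cases abs_cases (x i - u) <;> cases abs_cases (x i - v) <;> linarith
  calc w i * |x i - v| ≤ _ := mul_le_mul_of_nonneg_left hpoint (hw i)
    _ = _ := by split_ifs <;> ring

lemma weightedDist_le_add_mul_sum_le (hw : ∀ i, 0 ≤ w i) (u v : ℝ) :
    weightedDist w x u ≤
      weightedDist w x v + (v - u) * (∑ i, w i - 2 * ∑ i with x i ≤ u, w i) := by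
  have h := weightedDist_le_add_mul_sum_ge (x := -x) hw (-v) (-u)
  simpa only [weightedDist_neg, Pi.neg_apply, neg_le_neg_iff, neg_sub_neg] using h

lemma mul_sum_ge_add_mul_sum_ge_le_weightedDist (hw : ∀ i, 0 ≤ w i) (a b o : ℝ) :
    (a - o) * ∑ i with a ≤ x i, w i + (b - a) * ∑ i with b ≤ x i, w i ≤ weightedDist w x o := by
  simp only [weightedDist, sum_filter, mul_sum, ← sum_add_distrib]
  refine sum_le_sum fun i _ => ?_
  have hpoint : (a - o) * (if a ≤ x i then 1 else 0) + (b - a) * (if b ≤ x i then 1 else 0)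
      ≤ |x i - o| := by
    split_ifs <;> cases abs_cases (x i - o) <;> linarith
  calc _ = w i * _ := by split_ifs <;> ring
    _ ≤ w i * |x i - o| := mul_le_mul_of_nonneg_left hpoint (hw i)

lemma mul_sum_le_add_mul_sum_ge_le_weightedDist (hw : ∀ i, 0 ≤ w i) (a b o : ℝ) :
    (o - a) * ∑ i with x i ≤ a, w i + (b - o) * ∑ i with b ≤ x i, w i ≤ weightedDist w x o := by
  simp only [weightedDist, sum_filter, mul_sum, ← sum_add_distrib]
  refine sum_le_sum fun i _ => ?_
  have hpoint : (o - a) * (if x i ≤ a then 1 else 0) + (b - o) * (if b ≤ x i then 1 else 0)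
      ≤ |x i - o| := by
    split_ifs <;> cases abs_cases (x i - o) <;> linarith
  calc _ = w i * _ := by split_ifs <;> ring
    _ ≤ w i * |x i - o| := mul_le_mul_of_nonneg_left hpoint (hw i)

-- The segment from `o` to `a` is crossed by both facilities, the one from `a` to `b` only by the
-- facility at `b`: hence the factor `C + 1` in one hypothesis and `2 * C` in the other.
lemma weightedDist_add_le_of_le_of_le (hw : ∀ i, 0 ≤ w i) (hC : 1 ≤ C) (hoa : o ≤ a) (hab : a ≤ b)
    (ha : ∑ i, w i ≤ (C + 1) * ∑ i with a ≤ x i, w i)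
    (hb : ∑ i, w i ≤ 2 * C * ∑ i with b ≤ x i, w i) :
    weightedDist w x a + weightedDist w x b ≤ 2 * C * weightedDist w x o := by
  have hmove_a := weightedDist_le_add_mul_sum_ge (x := x) hw o a
  have hmove_b := weightedDist_le_add_mul_sum_ge (x := x) hw a b
  have hseg_a := mul_le_mul_of_nonneg_left ha (sub_nonneg.2 hoa)
  have hseg_b := mul_le_mul_of_nonneg_left hb (sub_nonneg.2 hab)
  have hlower := mul_le_mul_of_nonneg_left
    (mul_sum_ge_add_mul_sum_ge_le_weightedDist (x := x) hw a b o) (sub_nonneg.2 hC)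
  linarith

lemma weightedDist_add_le_of_ge_of_ge (hw : ∀ i, 0 ≤ w i) (hC : 1 ≤ C) (hab : a ≤ b) (hbo : b ≤ o)
    (ha : ∑ i, w i ≤ 2 * C * ∑ i with x i ≤ a, w i)
    (hb : ∑ i, w i ≤ (C + 1) * ∑ i with x i ≤ b, w i) :
    weightedDist w x a + weightedDist w x b ≤ 2 * C * weightedDist w x o := by
  have h := weightedDist_add_le_of_le_of_le (x := -x) hw hC (neg_le_neg hbo) (neg_le_neg hab)
    (by simpa only [Pi.neg_apply, neg_le_neg_iff] using hb)
    (by simpa only [Pi.neg_apply, neg_le_neg_iff] using ha)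
  simpa only [weightedDist_neg, add_comm] using h

lemma weightedDist_add_le_of_mem_Icc (hw : ∀ i, 0 ≤ w i) (hC : 1 ≤ C) (hao : a ≤ o) (hob : o ≤ b)
    (ha : ∑ i, w i ≤ 2 * C * ∑ i with x i ≤ a, w i)
    (hb : ∑ i, w i ≤ 2 * C * ∑ i with b ≤ x i, w i) :
    weightedDist w x a + weightedDist w x b ≤ 2 * C * weightedDist w x o := by
  have hmove_a := weightedDist_le_add_mul_sum_le (x := x) hw a o
  have hmove_b := weightedDist_le_add_mul_sum_ge (x := x) hw o b
  have hseg_a := mul_le_mul_of_nonneg_left ha (sub_nonneg.2 hao)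
  have hseg_b := mul_le_mul_of_nonneg_left hb (sub_nonneg.2 hob)
  have hlower := mul_le_mul_of_nonneg_left
    (mul_sum_le_add_mul_sum_ge_le_weightedDist (x := x) hw a b o) (sub_nonneg.2 hC)
  linarith

lemma weightedDist_add_le (hw : ∀ i, 0 ≤ w i) (hC : 1 ≤ C) (hab : a ≤ b)
    (ha_le : ∑ i, w i ≤ 2 * C * ∑ i with x i ≤ a, w i)
    (ha_ge : ∑ i, w i ≤ (C + 1) * ∑ i with a ≤ x i, w i)
    (hb_le : ∑ i, w i ≤ (C + 1) * ∑ i with x i ≤ b, w i)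
    (hb_ge : ∑ i, w i ≤ 2 * C * ∑ i with b ≤ x i, w i) (o : ℝ) :
    weightedDist w x a + weightedDist w x b ≤ 2 * C * weightedDist w x o := by
  rcases le_total o a with hoa | hao
  · exact weightedDist_add_le_of_le_of_le hw hC hoa hab ha_ge hb_ge
  rcases le_total o b with hob | hbo
  · exact weightedDist_add_le_of_mem_Icc hw hC hao hob ha_le hb_ge
  · exact weightedDist_add_le_of_ge_of_ge hw hC hab hbo ha_le hb_le

end WeightedDist

/-! ### The social cost as a weighted distance -/

section Weights

variable {k m : ℕ}

lemma numGroups_pos (S : FLSetting k m) : 0 < m :=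
  (S.grp ⟨0, two_pos.trans_le S.hn⟩).pos

variable (S : FLSetting k m)

lemma groupSize_pos (j : Fin m) : 0 < groupSize S j := by
  obtain ⟨i, hi⟩ := S.surj j
  exact card_pos.2 ⟨i, mem_filter.2 ⟨mem_univ i, hi⟩⟩

lemma card_groupMS (x : Fin S.n → ℝ) (j : Fin m) : (groupMS S x j).card = groupSize S j :=
  Multiset.card_map _ _

lemma card_repsMS (M : TwoPhase k) (x : Fin S.n → ℝ) : (repsMS M S x).card = m := by
  simp [repsMS]

/-- The weight of an agent in the social cost: each group has total weight `1 / m`, shared equally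
among its agents. -/
def agentWeight (i : Fin S.n) : ℝ :=
  (1 / (m : ℝ)) * (1 / (groupSize S (S.grp i) : ℝ))

lemma agentWeight_nonneg (i : Fin S.n) : 0 ≤ agentWeight S i := by
  unfold agentWeight
  positivity

lemma sum_agentWeight_mul (f : Fin S.n → ℝ) :
    ∑ i, agentWeight S i * f i =
      (1 / (m : ℝ)) * ∑ j, (1 / (groupSize S j : ℝ)) * ∑ i with S.grp i = j, f i := by
  rw [← sum_fiberwise univ S.grp, mul_sum]
  refine sum_congr rfl fun j _ => ?_
  rw [mul_sum, mul_sum]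
  refine sum_congr rfl fun i hi => ?_
  rw [agentWeight, (mem_filter.1 hi).2, mul_assoc]

lemma SC_sumCost (x : Fin S.n → ℝ) (y : Fin k → ℝ) :
    SC (sumCost k) S x y = ∑ ℓ, weightedDist (agentWeight S) x (y ℓ) := by
  calc SC (sumCost k) S x y = ∑ i, agentWeight S i * ∑ ℓ, |x i - y ℓ| :=
        (sum_agentWeight_mul S fun i => sumCost k (x i) y).symm
    _ = ∑ ℓ, weightedDist (agentWeight S) x (y ℓ) := by
      simp only [weightedDist, mul_sum]
      exact sum_comm

lemma sum_agentWeight_filter (x : Fin S.n → ℝ) (p : ℝ → Prop) [DecidablePred p] :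
    ∑ i with p (x i), agentWeight S i =
      (1 / (m : ℝ)) * ∑ j, ((groupMS S x j).countP p : ℝ) / groupSize S j := by
  have hcount (j : Fin m) : ((groupMS S x j).countP p : ℝ) =
      ∑ i with S.grp i = j, if p (x i) then 1 else 0 := by
    rw [groupMS, Multiset.countP_map, sum_boole]
    rfl
  calc ∑ i with p (x i), agentWeight S i = ∑ i, agentWeight S i * if p (x i) then 1 else 0 := by
        simp only [sum_filter, mul_ite, mul_one, mul_zero]
    _ = _ := by simp only [sum_agentWeight_mul, hcount, one_div_mul_eq_div]

lemma sum_agentWeight : ∑ i, agentWeight S i = 1 := by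
  have hm : (m : ℝ) ≠ 0 := mod_cast (numGroups_pos S).ne'
  have hg (j : Fin m) : (groupSize S j : ℝ) ≠ 0 := mod_cast (groupSize_pos S j).ne'
  have h := sum_agentWeight_filter S (fun _ => 0) (fun _ => True)
  simpa [card_groupMS, hg, hm] using h

lemma mul_le_sum_agentWeight_filter (M : TwoPhase k) (x : Fin S.n → ℝ) {θ c : ℝ} {p : ℝ → Prop}
    [DecidablePred p] (hθ : 0 ≤ θ) (hreps : c * m ≤ (repsMS M S x).countP p)
    (hgroup : ∀ j, p (M.rep m (groupMS S x j)) →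
      θ * groupSize S j ≤ (groupMS S x j).countP p) :
    θ * c ≤ ∑ i with p (x i), agentWeight S i := by
  have hm : (0 : ℝ) < m := mod_cast numGroups_pos S
  have hg (j : Fin m) : θ * (if p (M.rep m (groupMS S x j)) then 1 else 0) ≤
      ((groupMS S x j).countP p : ℝ) / groupSize S j := by
    split_ifs with hj
    · rw [mul_one, le_div_iff₀ (mod_cast groupSize_pos S j)]
      exact hgroup j hj
    · rw [mul_zero]
      positivity
  have hcount : ((repsMS M S x).countP p : ℝ) =
      ∑ j, if p (M.rep m (groupMS S x j)) then 1 else 0 := by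
    rw [repsMS, Multiset.countP_map, sum_boole]
    rfl
  rw [sum_agentWeight_filter, one_div_mul_eq_div, le_div_iff₀ hm, mul_assoc]
  calc θ * (c * m) ≤ θ * (repsMS M S x).countP p := mul_le_mul_of_nonneg_left hreps hθ
    _ = ∑ j, θ * if p (M.rep m (groupMS S x j)) then 1 else 0 := by rw [hcount, mul_sum]
    _ ≤ ∑ j, ((groupMS S x j).countP p : ℝ) / groupSize S j := sum_le_sum fun j _ => hg j

end Weights

/-! ### The quantile mechanism -/

section Mechanism

variable {m : ℕ} (S : FLSetting 2 m) (x : Fin S.n → ℝ)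

lemma mul_le_sum_agentWeight_le_kthLeftmost {θ c : ℝ} (l r : ℝ) (hθ0 : 0 ≤ θ) (hθ1 : θ ≤ 1)
    (hc : c ≤ 1) :
    θ * c ≤ ∑ i with x i ≤ kthLeftmost (repsMS (Mmech θ l r) S x) ⌈c * (m : ℝ)⌉₊,
      agentWeight S i := by
  refine mul_le_sum_agentWeight_filter S (Mmech θ l r) x (p := (· ≤ kthLeftmost _ _)) hθ0 ?_
    fun j hj => ?_
  · simpa only [card_repsMS] using
      mul_card_le_countP_le_kthLeftmost (repsMS (Mmech θ l r) S x) hc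
  · rw [← card_groupMS S x j]
    exact (mul_card_le_countP_le_kthLeftmost _ hθ1).trans
      (mod_cast countP_mono_of_imp _ fun z hz => le_trans hz hj)

lemma mul_le_sum_agentWeight_kthLeftmost_le {θ c : ℝ} (l r : ℝ) (hθ0 : 0 ≤ θ) (hθ1 : θ ≤ 1)
    (hc : 0 ≤ c) :
    (1 - θ) * (1 - c) ≤ ∑ i with kthLeftmost (repsMS (Mmech θ l r) S x) ⌈c * (m : ℝ)⌉₊ ≤ x i,
      agentWeight S i := by
  refine mul_le_sum_agentWeight_filter S (Mmech θ l r) x (p := (kthLeftmost _ _ ≤ ·))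
    (sub_nonneg.2 hθ1) ?_ fun j hj => ?_
  · simpa only [card_repsMS] using
      mul_card_le_countP_kthLeftmost_le (repsMS (Mmech θ l r) S x) hc
  · rw [← card_groupMS S x j]
    exact (mul_card_le_countP_kthLeftmost_le _ hθ0).trans
      (mod_cast countP_mono_of_imp _ fun z hz => le_trans hj hz)

theorem SC_outcome_Mmech_le {θ l r C : ℝ} (hθ0 : 0 ≤ θ) (hθ1 : θ ≤ 1) (hl : 0 ≤ l) (hlr : l ≤ r)
    (hr : r ≤ 1) (hC : 1 ≤ C)
    (hl_le : 1 ≤ 2 * C * (θ * l)) (hl_ge : 1 ≤ (C + 1) * ((1 - θ) * (1 - l)))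
    (hr_le : 1 ≤ (C + 1) * (θ * r)) (hr_ge : 1 ≤ 2 * C * ((1 - θ) * (1 - r))) (y : Fin 2 → ℝ) :
    SC (sumCost 2) S x (outcome (Mmech θ l r) S x) ≤ C * SC (sumCost 2) S x y := by
  set R := repsMS (Mmech θ l r) S x with hR
  set a := kthLeftmost R ⌈l * (m : ℝ)⌉₊
  set b := kthLeftmost R ⌈r * (m : ℝ)⌉₊
  have hab : a ≤ b := kthLeftmost_mono (by gcongr) (by
    rw [hR, card_repsMS]
    exact ceil_mul_natCast_le hr m)
  have htwo (o : ℝ) : weightedDist (agentWeight S) x a + weightedDist (agentWeight S) x b ≤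
      2 * C * weightedDist (agentWeight S) x o := by
    have hmass {B μ ν : ℝ} (hB : 0 ≤ B) (hBμ : 1 ≤ B * μ) (hμν : μ ≤ ν) :
        ∑ i, agentWeight S i ≤ B * ν :=
      (sum_agentWeight S).trans_le (hBμ.trans (mul_le_mul_of_nonneg_left hμν hB))
    have hC2 : 0 ≤ 2 * C := by linarith
    have hC1 : 0 ≤ C + 1 := by linarith
    exact weightedDist_add_le (agentWeight_nonneg S) hC hab
      (hmass hC2 hl_le (mul_le_sum_agentWeight_le_kthLeftmost S x l r hθ0 hθ1 (hlr.trans hr)))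
      (hmass hC1 hl_ge (mul_le_sum_agentWeight_kthLeftmost_le S x l r hθ0 hθ1 hl))
      (hmass hC1 hr_le (mul_le_sum_agentWeight_le_kthLeftmost S x l r hθ0 hθ1 hr))
      (hmass hC2 hr_ge (mul_le_sum_agentWeight_kthLeftmost_le S x l r hθ0 hθ1 (hl.trans hlr))) o
  have houtcome : outcome (Mmech θ l r) S x = ![a, b] := rfl
  simp only [houtcome, SC_sumCost, Fin.sum_univ_two, Matrix.cons_val_zero, Matrix.cons_val_one]
  linarith [htwo (y 0), htwo (y 1)]

theorem stmt4_general (y : Fin 2 → ℝ) :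
    SC (sumCost 2) S x (outcome (Mmech (1 / 2) (√2 - 1) (2 - √2)) S x)
      ≤ (1 + √2) * SC (sumCost 2) S x y := by
  have hsq : √2 * √2 = 2 := Real.mul_self_sqrt zero_le_two
  have hs1 : 1 ≤ √2 := Real.one_le_sqrt.2 one_le_two
  have hs2 : √2 ≤ 3 / 2 := Real.sqrt_le_iff.2 ⟨by norm_num, by norm_num⟩
  apply SC_outcome_Mmech_le S x <;> linarith

end Mechanism

/-- In the sum-variant with two facilities, for every `m ≥ 2` with `m ∉ {3,5}`, the
mechanism `M_m(1/2, √2−1, 2−√2)` has approximation ratio at most `1 + √2`. -/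
theorem stmt4 (m : ℕ) (hm : 2 ≤ m) (hm3 : m ≠ 3) (hm5 : m ≠ 5)
    (S : FLSetting 2 m) (x : Fin S.n → ℝ) (y : Fin 2 → ℝ) (hy : Feasible S x y) :
    SC (sumCost 2) S x (outcome (Mmech (1 / 2) (Real.sqrt 2 - 1) (2 - Real.sqrt 2)) S x)
      ≤ (1 + Real.sqrt 2) * SC (sumCost 2) S x y :=
  stmt4_general S x y

end
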